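/- Let s > 0 and set X := √(b_{s,5}·b_{16s,5}) and Y := √(b_{s,5}/b_{16s,5}). Then (Y^8 + 1/Y^8) - 52(Y^6 + 1/Y^6) - 1024(Y^4 + 1/Y^4) - 3987(Y^2 + 1/Y^2) - 5(X + 1/X)[1076(Y + 1/Y) + 384(Y^3 + 1/Y^3) + 35(Y^5 + 1/Y^5)] - 5^2(X^2 + 1/X^2)[92(Y^2 + 1/Y^2) + 8(Y^4 + 1/Y^4) + 149] - 5^3(X^3 + 1/X^3)[12(Y + 1/Y) + (Y^3 + 1/Y^3)] - 5^4(X^4 + 1/X^4) - 7676 = 0. -/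

import Mathlib

open Real

/-- Ramanujan's theta function `φ(q) = ∑_{n=-∞}^∞ q^(n^2)`. -/
noncomputable def phi (q : ℝ) : ℝ := ∑' n : ℤ, q ^ (n ^ 2)

/-- Ramanujan's theta function `ψ(q) = ∑_{n=0}^∞ q^(n(n+1)/2)`. -/
noncomputable def psi (q : ℝ) : ℝ := ∑' n : ℕ, q ^ (n * (n + 1) / 2)

/-- `fneg q` is Ramanujan's `f(-q) = ∑_{n=-∞}^∞ (-1)^n q^(n(3n-1)/2)`. -/
noncomputable def fneg (q : ℝ) : ℝ := ∑' n : ℤ, (-1 : ℝ) ^ n * q ^ (n * (3 * n - 1) / 2)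

/-- The remarkable product of theta-functions `b_{s,t}`. -/
noncomputable def b (s t : ℝ) : ℝ :=
  t * Real.exp (-((t - 1) * (π / 4) * Real.sqrt (s / t))) *
      psi (-Real.exp (-(π * Real.sqrt (s * t)))) ^ 2 *
      phi (-Real.exp (-(2 * π * Real.sqrt (s * t)))) ^ 2 /
    (psi (-Real.exp (-(π * Real.sqrt (s / t)))) ^ 2 *
      phi (-Real.exp (-(2 * π * Real.sqrt (s / t)))) ^ 2)

open Filter Topology Finset

/-!
Multiplication by `2 - i` on `ℤ[i]` splits a product of two theta series of nome `w` into theta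
series of nome `w ^ 5`. Applied to `φ²` and to `∑ w ^ (n ^ 2 + n)` squared, and combined with the
Jacobi triple product, it gives two eta quotient identities for `Γ₀(10)`. They say that
`k(q) = q ∏_{n ≥ 1} (1 - q ^ n) (1 - q ^ (10 n)) ^ 5 / ((1 - q ^ (2 n)) (1 - q ^ (5 n)) ^ 5)`
satisfies `b_{s,5} = 5 k / ((1 + k) (1 - 4 k))` at `q = exp (-π √(s / 5))`, and that `k(q)` and
`k(q²)` are related by a quadratic equation. Replacing `s` by `16 s` replaces `q` by `q ^ 4`, so
eliminating `k(q²)` relates `k(q)` to `k(q ^ 4)`. With `x = b_{s,5}`, `z = b_{16 s,5}`, the points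
`(x, γ)` and `(z, δ)` lie on the rational conic `5 γ² = 5 x² + 6 x + 5`, on which this relation
becomes bilinear in `γ` and `δ`. Taking norms removes `γ` and `δ`, leaving a polynomial equation in
`x = X Y` and `z = X / Y`.
-/

section Finite

/-- The `q`-Pochhammer symbol `(a; q)_n = ∏_{i < n} (1 - a q^i)`. -/
def qPochhammer {R : Type*} [CommRing R] (a q : R) (n : ℕ) : R := ∏ i ∈ range n, (1 - a * q ^ i)

/-- The Gaussian binomial coefficient, defined by the `q`-Pascal rule so that it makes sense in
any semiring. -/
def gaussBinom {R : Type*} [Semiring R] (q : R) : ℕ → ℕ → R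
  | _, 0 => 1
  | 0, _ + 1 => 0
  | n + 1, k + 1 => gaussBinom q n k + q ^ (k + 1) * gaussBinom q n (k + 1)

section Semiring

variable {R : Type*} [Semiring R]

lemma gaussBinom_zero_right (q : R) (n : ℕ) : gaussBinom q n 0 = 1 := by
  cases n <;> rfl

lemma gaussBinom_succ_succ (q : R) (n k : ℕ) : gaussBinom q (n + 1) (k + 1) =
    gaussBinom q n k + q ^ (k + 1) * gaussBinom q n (k + 1) := rfl

lemma gaussBinom_eq_zero_of_lt (q : R) {n k : ℕ} (h : n < k) : gaussBinom q n k = 0 := by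
  induction n generalizing k with
  | zero => obtain ⟨k, rfl⟩ := Nat.exists_eq_succ_of_ne_zero h.ne'; rfl
  | succ n ih =>
    obtain ⟨k, rfl⟩ := Nat.exists_eq_succ_of_ne_zero (Nat.ne_zero_of_lt h)
    rw [gaussBinom_succ_succ, ih (by lia), ih (by lia), mul_zero, add_zero]

end Semiring

lemma gaussBinom_nonneg {q : ℝ} (hq : 0 ≤ q) (n k : ℕ) : 0 ≤ gaussBinom q n k := by
  induction n, k using gaussBinom.induct with
  | case1 => simp [gaussBinom_zero_right]
  | case2 => exact le_rfl
  | case3 n k ih ih' =>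
    rw [gaussBinom_succ_succ]
    positivity

lemma norm_gaussBinom_le {R : Type*} [SeminormedRing R] [NormOneClass R] (q : R) (n k : ℕ) :
    ‖gaussBinom q n k‖ ≤ gaussBinom ‖q‖ n k := by
  induction n, k using gaussBinom.induct with
  | case1 => simp [gaussBinom_zero_right]
  | case2 => simp [gaussBinom]
  | case3 n k ih ih' =>
    simp only [gaussBinom_succ_succ]
    refine (norm_add_le _ _).trans (add_le_add ih ((norm_mul_le _ _).trans ?_))
    gcongr
    exact norm_pow_le _ _

section CommRing

variable {R : Type*} [CommRing R]

lemma qPochhammer_succ (a q : R) (n : ℕ) :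
    qPochhammer a q (n + 1) = qPochhammer a q n * (1 - a * q ^ n) :=
  prod_range_succ _ _

lemma qPochhammer_add (a q : R) (m n : ℕ) :
    qPochhammer a q (m + n) = qPochhammer a q m * qPochhammer (a * q ^ m) q n := by
  simp only [qPochhammer, prod_range_add, pow_add, mul_assoc]

lemma qPochhammer_mul (a q : R) (d n : ℕ) :
    qPochhammer a q (d * n) = ∏ r ∈ range d, qPochhammer (a * q ^ r) (q ^ d) n := by
  induction n with
  | zero => simp [qPochhammer]
  | succ n ih =>
    simp only [Nat.mul_succ, qPochhammer_add, ih, qPochhammer_succ, prod_mul_distrib]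
    congr 1
    exact prod_congr rfl fun r _ ↦ by ring

lemma qPochhammer_mul_qPochhammer_neg (a q : R) (n : ℕ) :
    qPochhammer a q n * qPochhammer (-a) q n = qPochhammer (a ^ 2) (q ^ 2) n := by
  rw [qPochhammer, qPochhammer, ← prod_mul_distrib]
  exact prod_congr rfl fun i _ ↦ by ring

theorem gaussBinom_add_mul_qPochhammer_mul_qPochhammer (q : R) (i j : ℕ) :
    gaussBinom q (i + j) i * qPochhammer q q i * qPochhammer q q j = qPochhammer q q (i + j) := by
  induction hn : i + j generalizing i j with
  | zero =>
    obtain ⟨rfl, rfl⟩ := Nat.add_eq_zero_iff.1 hn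
    simp [gaussBinom, qPochhammer]
  | succ n ih =>
    rcases i with _ | i
    · obtain rfl : j = n + 1 := by lia
      simp [gaussBinom, qPochhammer]
    have hi := ih i j (by lia)
    rw [gaussBinom_succ_succ, qPochhammer_succ q q n]
    rcases j with _ | j
    · obtain rfl : i = n := by lia
      rw [gaussBinom_eq_zero_of_lt q (Nat.lt_succ_self i), qPochhammer_succ]
      linear_combination (1 - q ^ (i + 1)) * hi
    · have hj := ih (i + 1) j (by lia)
      obtain rfl : n = i + j + 1 := by lia
      rw [qPochhammer_succ q q j] at hi ⊢
      rw [qPochhammer_succ q q i] at hj ⊢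
      linear_combination (1 - q * q ^ i) * hi + q ^ (i + 1) * (1 - q * q ^ j) * hj

end CommRing

theorem prod_one_add_mul_pow_eq_sum_gaussBinom {R : Type*} [CommSemiring R] (q x : R) (n : ℕ) :
    ∏ i ∈ range n, (1 + x * q ^ i) =
      ∑ k ∈ range (n + 1), gaussBinom q n k * q ^ k.choose 2 * x ^ k := by
  induction n generalizing x with
  | zero => simp [gaussBinom]
  | succ n ih =>
    have hshift : ∏ i ∈ range (n + 1), (1 + x * q ^ i) =
        (∏ i ∈ range n, (1 + x * q * q ^ i)) * (1 + x) := by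
      simp only [prod_range_succ', pow_zero, mul_one, pow_succ', mul_assoc]
    have hlast : ∑ k ∈ range (n + 1), gaussBinom q n k * q ^ k.choose 2 * (x * q) ^ k =
        ∑ k ∈ range (n + 1),
          gaussBinom q n (k + 1) * q ^ (k + 1).choose 2 * (x * q) ^ (k + 1) + 1 := by
      rw [sum_range_succ', sum_range_succ _ n, gaussBinom_eq_zero_of_lt q (Nat.lt_succ_self n)]
      simp [gaussBinom_zero_right]
    rw [hshift, ih, mul_add, mul_one, sum_range_succ' _ (n + 1)]
    nth_rewrite 1 [hlast]
    rw [add_right_comm, sum_mul, ← sum_add_distrib]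
    congr 1
    · refine sum_congr rfl fun k _ ↦ ?_
      rw [gaussBinom_succ_succ, Nat.choose_succ_succ' k 1, Nat.choose_one_right]
      ring
    · simp [gaussBinom_zero_right]

variable {K : Type*} [Field K] {w z : K}

lemma prod_one_add_mul_inv_pow (hw : w ≠ 0) (hz : z ≠ 0) (N : ℕ) :
    ∏ i ∈ range N, (1 + z * w⁻¹ ^ (2 * i + 1)) =
      z ^ N * w⁻¹ ^ N ^ 2 * qPochhammer (-(z⁻¹ * w)) (w ^ 2) N := by
  induction N with
  | zero => simp [qPochhammer]
  | succ N ih =>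
    have hfactor : 1 + z * w⁻¹ ^ (2 * N + 1) =
        z * w⁻¹ ^ (2 * N + 1) * (1 - -(z⁻¹ * w) * (w ^ 2) ^ N) := by
      simp only [inv_pow]
      field_simp
      ring
    rw [prod_range_succ, ih, qPochhammer_succ, hfactor]
    ring

/-- Completing the square: the exponent of `w` is `k ^ 2 - 2 * N * k = (k - N) ^ 2 - N ^ 2`. -/
lemma pow_choose_two_mul_pow (hw : w ≠ 0) (hz : z ≠ 0) (N k : ℕ) :
    (w ^ 2) ^ k.choose 2 * (z * w * w⁻¹ ^ (2 * N)) ^ k =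
      z ^ N * w⁻¹ ^ N ^ 2 * (w ^ ((k : ℤ) - N) ^ 2 * z ^ ((k : ℤ) - N)) := by
  have hchoose : 2 * k.choose 2 + k = k ^ 2 := by
    induction k with
    | zero => rfl
    | succ k ih =>
      rw [Nat.choose_succ_succ' k 1, Nat.choose_one_right]
      linear_combination ih
  have hexp : w ^ ((k : ℤ) - N) ^ 2 = w ^ (2 * k.choose 2 + k) * w ^ N ^ 2 * w⁻¹ ^ (2 * N * k) := by
    rw [hchoose, inv_pow, ← div_eq_mul_inv, eq_div_iff (pow_ne_zero _ hw), ← pow_add]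
    simp only [← zpow_natCast, ← zpow_add₀ hw]
    congr 1
    push_cast
    ring
  rw [hexp, zpow_sub₀ hz, zpow_natCast, zpow_natCast, mul_pow _ _ k, ← pow_mul _ _ k,
    inv_pow _ (N ^ 2)]
  field_simp
  ring

theorem qPochhammer_mul_qPochhammer_eq_sum_gaussBinom (hw : w ≠ 0) (hz : z ≠ 0) (N : ℕ) :
    qPochhammer (-(z * w)) (w ^ 2) N * qPochhammer (-(z⁻¹ * w)) (w ^ 2) N =
      ∑ n ∈ Icc (-N : ℤ) N, gaussBinom (w ^ 2) (2 * N) (N + n).toNat * (w ^ n ^ 2 * z ^ n) := by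
  have hsplit : ∏ i ∈ range (2 * N), (1 + z * w * w⁻¹ ^ (2 * N) * (w ^ 2) ^ i) =
      (∏ i ∈ range N, (1 + z * w⁻¹ ^ (2 * i + 1))) * qPochhammer (-(z * w)) (w ^ 2) N := by
    rw [two_mul, prod_range_add, ← prod_range_reflect]
    congr 1
    · refine prod_congr rfl fun i hi ↦ ?_
      obtain ⟨j, rfl⟩ := Nat.exists_eq_add_of_lt (mem_range.1 hi)
      rw [show i + j + 1 - 1 - i = j by lia]
      simp only [inv_pow]
      field_simp
      ring
    · refine prod_congr rfl fun i _ ↦ ?_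
      simp only [inv_pow]
      field_simp
      ring
  have hprod := hsplit.symm.trans (prod_one_add_mul_pow_eq_sum_gaussBinom _ _ _)
  rw [prod_one_add_mul_inv_pow hw hz, mul_assoc] at hprod
  have hne : z ^ N * w⁻¹ ^ N ^ 2 ≠ 0 := by positivity
  refine mul_left_cancel₀ hne ?_
  rw [mul_comm (qPochhammer _ _ _), hprod, mul_sum]
  refine sum_nbij' (fun k ↦ (k : ℤ) - N) (fun n ↦ (N + n).toNat) ?_ ?_ ?_ ?_ fun k _ ↦ ?_
  · intro k hk; simp only [mem_range, mem_Icc] at *; lia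
  · intro n hn; simp only [mem_range, mem_Icc] at *; lia
  · intro k _; simp
  · intro n hn; simp only [mem_Icc] at hn; lia
  · rw [add_sub_cancel, Int.toNat_natCast, mul_assoc, pow_choose_two_mul_pow hw hz]
    ring

end Finite

section Infinite

/-- The infinite `q`-Pochhammer symbol `(a; q)_∞ = ∏_{i ≥ 0} (1 - a q^i)`. -/
noncomputable def qPochhammerInf {𝕜 : Type*} [NormedField 𝕜] (a q : 𝕜) : 𝕜 :=
  ∏' i : ℕ, (1 - a * q ^ i)

/-- Euler's function `∏_{n ≥ 1} (1 - q^n)`. -/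
noncomputable def eulerFun {𝕜 : Type*} [NormedField 𝕜] (q : 𝕜) : 𝕜 := qPochhammerInf q q

lemma norm_pow_lt_one {R : Type*} [SeminormedRing R] [NormOneClass R] {q : R}
    (hq : ‖q‖ < 1) {n : ℕ} (hn : n ≠ 0) : ‖q ^ n‖ < 1 :=
  (norm_pow_le q n).trans_lt (pow_lt_one₀ (norm_nonneg q) hq hn)

variable {𝕜 : Type*} [NormedField 𝕜] {q : 𝕜}

lemma summable_norm_neg_mul_pow (hq : ‖q‖ < 1) (a : 𝕜) : Summable fun i : ℕ ↦ ‖-(a * q ^ i)‖ := by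
  simp only [norm_neg, norm_mul, norm_pow]
  exact (summable_geometric_of_lt_one (norm_nonneg q) hq).mul_left _

lemma one_sub_mul_pow_self_ne_zero (hq : ‖q‖ < 1) (i : ℕ) : 1 - q * q ^ i ≠ 0 := by
  rw [← pow_succ', sub_ne_zero]
  rintro h
  simpa [← h] using norm_pow_lt_one hq i.succ_ne_zero

lemma qPochhammer_self_ne_zero (hq : ‖q‖ < 1) (n : ℕ) : qPochhammer q q n ≠ 0 :=
  prod_ne_zero_iff.2 fun i _ ↦ one_sub_mul_pow_self_ne_zero hq i

variable [CompleteSpace 𝕜]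

lemma tendsto_qPochhammer (hq : ‖q‖ < 1) (a : 𝕜) :
    Tendsto (qPochhammer a q) atTop (𝓝 (qPochhammerInf a q)) := by
  have := multipliable_one_add_of_summable (summable_norm_neg_mul_pow hq a)
  simp only [← sub_eq_add_neg] at this
  exact this.tendsto_prod_tprod_nat

lemma qPochhammerInf_eq_one_sub_mul (hq : ‖q‖ < 1) (a : 𝕜) :
    qPochhammerInf a q = (1 - a) * qPochhammerInf (a * q) q := by
  refine tendsto_nhds_unique ((tendsto_qPochhammer hq a).comp (tendsto_add_atTop_nat 1)) ?_
  refine ((tendsto_qPochhammer hq (a * q)).const_mul (1 - a)).congr fun n ↦ ?_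
  rw [Function.comp_apply, add_comm, qPochhammer_add]
  simp [qPochhammer]

lemma qPochhammerInf_eq_prod (hq : ‖q‖ < 1) (a : 𝕜) {d : ℕ} (hd : d ≠ 0) :
    qPochhammerInf a q = ∏ r ∈ range d, qPochhammerInf (a * q ^ r) (q ^ d) := by
  refine tendsto_nhds_unique ((tendsto_qPochhammer hq a).comp
    (tendsto_id.const_mul_atTop' (Nat.pos_of_ne_zero hd))) ?_
  simp only [Function.comp_def, id, qPochhammer_mul]
  exact tendsto_finsetProd _ fun r _ ↦ tendsto_qPochhammer (norm_pow_lt_one hq hd) _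

lemma qPochhammerInf_mul_qPochhammerInf_neg (hq : ‖q‖ < 1) (a : 𝕜) :
    qPochhammerInf a q * qPochhammerInf (-a) q = qPochhammerInf (a ^ 2) (q ^ 2) :=
  tendsto_nhds_unique ((tendsto_qPochhammer hq a).mul (tendsto_qPochhammer hq (-a)))
    ((tendsto_qPochhammer (norm_pow_lt_one hq two_ne_zero) _).congr fun n ↦
      (qPochhammer_mul_qPochhammer_neg a q n).symm)

lemma eulerFun_ne_zero (hq : ‖q‖ < 1) : eulerFun q ≠ 0 := by
  simp only [eulerFun, qPochhammerInf, sub_eq_add_neg]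
  refine tprod_one_add_ne_zero_of_summable (fun i ↦ ?_) (summable_norm_neg_mul_pow hq q)
  simpa only [← sub_eq_add_neg] using one_sub_mul_pow_self_ne_zero hq i

lemma tendsto_gaussBinom (hq : ‖q‖ < 1) {α : Type*} {l : Filter α} {i j : α → ℕ}
    (hi : Tendsto i l atTop) (hj : Tendsto j l atTop) :
    Tendsto (fun x ↦ gaussBinom q (i x + j x) (i x)) l (𝓝 (eulerFun q)⁻¹) := by
  have hE := eulerFun_ne_zero hq
  have ht := tendsto_qPochhammer hq q
  have hlim := (ht.comp (hi.atTop_add_nonneg fun x ↦ (j x).zero_le)).div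
    ((ht.comp hi).mul (ht.comp hj)) (mul_ne_zero hE hE)
  rw [← eulerFun, div_mul_cancel_left₀ hE] at hlim
  refine hlim.congr fun x ↦ (div_eq_iff ?_).2 ?_
  · exact mul_ne_zero (qPochhammer_self_ne_zero hq _) (qPochhammer_self_ne_zero hq _)
  · rw [← mul_assoc]
    exact (gaussBinom_add_mul_qPochhammer_mul_qPochhammer q _ _).symm

section Real

variable {q : ℝ}

lemma qPochhammer_self_pos (hq₀ : 0 ≤ q) (hq₁ : q < 1) (n : ℕ) : 0 < qPochhammer q q n := by
  refine prod_pos fun i _ ↦ sub_pos.2 ?_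
  rw [← pow_succ']
  exact pow_lt_one₀ hq₀ hq₁ i.succ_ne_zero

lemma antitone_qPochhammer_self (hq₀ : 0 ≤ q) (hq₁ : q < 1) : Antitone (qPochhammer q q) := by
  refine antitone_nat_of_succ_le fun n ↦ ?_
  rw [qPochhammer_succ]
  exact mul_le_of_le_one_right (qPochhammer_self_pos hq₀ hq₁ n).le
    (sub_le_self _ (by positivity))

lemma eulerFun_le_qPochhammer_self (hq₀ : 0 ≤ q) (hq₁ : q < 1) (n : ℕ) :
    eulerFun q ≤ qPochhammer q q n :=
  (antitone_qPochhammer_self hq₀ hq₁).le_of_tendsto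
    (tendsto_qPochhammer (by rwa [norm_of_nonneg hq₀]) q) n

lemma eulerFun_pos (hq₀ : 0 ≤ q) (hq₁ : q < 1) : 0 < eulerFun q := by
  have hq : ‖q‖ < 1 := by rwa [norm_of_nonneg hq₀]
  exact (ge_of_tendsto' (tendsto_qPochhammer hq q) fun n ↦
    (qPochhammer_self_pos hq₀ hq₁ n).le).lt_of_ne' (eulerFun_ne_zero hq)

lemma gaussBinom_le_inv_eulerFun (hq₀ : 0 ≤ q) (hq₁ : q < 1) (n k : ℕ) :
    gaussBinom q n k ≤ (eulerFun q)⁻¹ := by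
  have hE := eulerFun_pos hq₀ hq₁
  rcases lt_or_ge n k with hnk | hkn
  · rw [gaussBinom_eq_zero_of_lt q hnk]
    positivity
  obtain ⟨j, rfl⟩ := Nat.exists_eq_add_of_le hkn
  have hle : gaussBinom q (k + j) k * qPochhammer q q k ≤ 1 := by
    refine le_of_mul_le_mul_right ?_ (qPochhammer_self_pos hq₀ hq₁ j)
    rw [gaussBinom_add_mul_qPochhammer_mul_qPochhammer, one_mul]
    exact antitone_qPochhammer_self hq₀ hq₁ (Nat.le_add_left j k)
  rw [← one_div, le_div_iff₀ hE]
  exact (mul_le_mul_of_nonneg_left (eulerFun_le_qPochhammer_self hq₀ hq₁ k)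
    (gaussBinom_nonneg hq₀ _ _)).trans hle

end Real

end Infinite

section Theta

/-- The general theta function `∑_{n ∈ ℤ} w^(n^2) z^n` of nome `w`. -/
noncomputable def thetaSeries {𝕜 : Type*} [NormedField 𝕜] (w z : 𝕜) : 𝕜 :=
  ∑' n : ℤ, w ^ n ^ 2 * z ^ n

variable {𝕜 : Type*} [NormedField 𝕜] {w z : 𝕜}

lemma summable_norm_pow_sq_mul_pow (hw : ‖w‖ < 1) (z : 𝕜) :
    Summable fun n : ℕ ↦ ‖w ^ n ^ 2 * z ^ n‖ := by
  have hlim : Tendsto (fun n : ℕ ↦ ‖w‖ ^ n * ‖z‖) atTop (𝓝 0) := by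
    simpa using (tendsto_pow_atTop_nhds_zero_of_lt_one (norm_nonneg w) hw).mul_const ‖z‖
  refine Summable.of_norm_bounded_eventually_nat summable_geometric_two ?_
  filter_upwards [hlim.eventually_le_const (show (0 : ℝ) < 1 / 2 by norm_num)] with n hn
  rw [norm_norm, norm_mul, norm_pow, norm_pow, sq, pow_mul, ← mul_pow]
  exact pow_le_pow_left₀ (by positivity) hn n

lemma summable_norm_zpow_sq_mul_zpow (hw : ‖w‖ < 1) (z : 𝕜) :
    Summable fun n : ℤ ↦ ‖w ^ n ^ 2 * z ^ n‖ := by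
  refine Summable.of_nat_of_neg ?_ ?_
  · exact_mod_cast summable_norm_pow_sq_mul_pow hw z
  · simp only [neg_sq, zpow_neg, ← inv_zpow]
    exact_mod_cast summable_norm_pow_sq_mul_pow hw z⁻¹

lemma thetaSeries_inv (w z : 𝕜) : thetaSeries w z⁻¹ = thetaSeries w z := by
  rw [thetaSeries, thetaSeries, ← (Equiv.neg ℤ).tsum_eq]
  simp [zpow_neg]

lemma thetaSeries_sq_mul (hw : w ≠ 0) (hz : z ≠ 0) :
    w * z * thetaSeries w (w ^ 2 * z) = thetaSeries w z := by
  rw [thetaSeries, thetaSeries, ← tsum_mul_left,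
    ← (Equiv.addRight (1 : ℤ)).tsum_eq fun n ↦ w ^ n ^ 2 * z ^ n]
  refine tsum_congr fun n ↦ ?_
  rw [Equiv.coe_addRight, show (n + 1) ^ 2 = n ^ 2 + 2 * n + 1 by ring, zpow_add_one₀ hz,
    zpow_add_one₀ hw, zpow_add₀ hw, zpow_mul, mul_zpow, zpow_ofNat]
  ring

variable [CompleteSpace 𝕜]

lemma tendsto_sum_gaussBinom_mul (hw : ‖w‖ < 1) (z : 𝕜) :
    Tendsto (fun N : ℕ ↦ ∑ n ∈ Icc (-N : ℤ) N,
        gaussBinom (w ^ 2) (2 * N) (N + n).toNat * (w ^ n ^ 2 * z ^ n)) atTop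
      (𝓝 ((eulerFun (w ^ 2))⁻¹ * thetaSeries w z)) := by
  have hw₂ := norm_pow_lt_one hw two_ne_zero
  have hbound (n k : ℕ) : ‖gaussBinom (w ^ 2) n k‖ ≤ (eulerFun ‖w ^ 2‖)⁻¹ :=
    (norm_gaussBinom_le _ n k).trans (gaussBinom_le_inv_eulerFun (norm_nonneg _) hw₂ n k)
  have htoNat (m : ℤ) : Tendsto (fun N : ℕ ↦ (N + m).toNat) atTop atTop :=
    tendsto_atTop_mono (fun N ↦ by lia) (tendsto_sub_atTop_nat m.natAbs)
  have hcoeff (n : ℤ) : Tendsto (fun N : ℕ ↦ gaussBinom (w ^ 2) (2 * N) (N + n).toNat) atTop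
      (𝓝 (eulerFun (w ^ 2))⁻¹) := by
    refine (tendsto_gaussBinom hw₂ (htoNat n) (htoNat (-n))).congr' ?_
    filter_upwards [eventually_ge_atTop n.natAbs] with N hN
    rw [show (N + n).toNat + (N + -n).toNat = 2 * N by lia]
  rw [thetaSeries, ← tsum_mul_left]
  refine Tendsto.congr (fun N ↦ (sum_eq_tsum_indicator _ _).symm)
    (tendsto_tsum_of_dominated_convergence
      ((summable_norm_zpow_sq_mul_zpow hw z).mul_left (eulerFun ‖w ^ 2‖)⁻¹) (fun n ↦ ?_)
      (.of_forall fun N n ↦ ?_))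
  · refine ((hcoeff n).mul_const _).congr' ?_
    filter_upwards [eventually_ge_atTop n.natAbs] with N hN
    have hn : n ∈ (Icc (-N : ℤ) N : Set ℤ) := mem_coe.2 (mem_Icc.2 (by lia))
    rw [Set.indicator_of_mem hn]
  · refine (norm_indicator_le_norm_self _ _).trans ?_
    rw [norm_mul]
    gcongr
    exact hbound _ _

theorem jacobi_triple_product (hw : ‖w‖ < 1) (hz : z ≠ 0) :
    thetaSeries w z = eulerFun (w ^ 2) *
      (qPochhammerInf (-(z * w)) (w ^ 2) * qPochhammerInf (-(z⁻¹ * w)) (w ^ 2)) := by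
  rcases eq_or_ne w 0 with rfl | hw₀
  · rw [thetaSeries, tsum_eq_single 0 fun n hn ↦ by simp [zero_zpow _ (pow_ne_zero 2 hn)]]
    simp [eulerFun, qPochhammerInf]
  have hw₂ := norm_pow_lt_one hw two_ne_zero
  have hlim := (tendsto_qPochhammer hw₂ (-(z * w))).mul (tendsto_qPochhammer hw₂ (-(z⁻¹ * w)))
  rw [← tendsto_nhds_unique (tendsto_sum_gaussBinom_mul hw z) (hlim.congr fun N ↦
    qPochhammer_mul_qPochhammer_eq_sum_gaussBinom hw₀ hz N),
    mul_inv_cancel_left₀ (eulerFun_ne_zero hw₂)]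

end Theta

section Quintic

/-- Multiplication by `2 - i` on the Gaussian integers, completed to a bijection by the five
residues modulo its range. -/
def gaussianFiveEquiv : Fin 5 × ℤ × ℤ ≃ ℤ × ℤ where
  toFun p := (2 * p.2.1 + p.2.2 + (p.1 : ℕ), 2 * p.2.2 - p.2.1)
  invFun p := (⟨((p.1 + 2 * p.2) % 5).toNat, by lia⟩,
    2 * ((p.1 + 2 * p.2) / 5) - p.2, (p.1 + 2 * p.2) / 5)
  left_inv := by
    rintro ⟨⟨j, hj⟩, m, n⟩
    simp only [Prod.mk.injEq, Fin.mk.injEq]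
    lia
  right_inv := by
    rintro ⟨a, c⟩
    simp only [Prod.mk.injEq]
    lia

variable {𝕜 : Type*} [NormedField 𝕜] {w : 𝕜}

lemma pow_mul_thetaSeries_pow_add (hw : w ≠ 0) (d a : ℕ) :
    w ^ a * thetaSeries (w ^ d) (w ^ (d + a)) =
      thetaSeries (w ^ d) (w ^ ((d : ℤ) - a).natAbs) := by
  have heven : thetaSeries (w ^ d) (w ^ ((d : ℤ) - a).natAbs) =
      thetaSeries (w ^ d) (w ^ ((a : ℤ) - d)) := by
    rw [← zpow_natCast w (Int.natAbs _)]
    rcases le_total a d with h | h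
    · rw [show ((d - a : ℤ).natAbs : ℤ) = -(a - d) by lia, zpow_neg, thetaSeries_inv]
    · rw [show ((d - a : ℤ).natAbs : ℤ) = a - d by lia]
  rw [heven, ← thetaSeries_sq_mul (pow_ne_zero d hw) (zpow_ne_zero _ hw)]
  simp only [← zpow_natCast, ← zpow_mul, ← zpow_add₀ hw]
  congr <;> push_cast <;> ring

variable [CompleteSpace 𝕜]

theorem thetaSeries_mul_thetaSeries (hw : ‖w‖ < 1) (hw₀ : w ≠ 0) {y z : 𝕜} (hy : y ≠ 0)
    (hz : z ≠ 0) :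
    thetaSeries w y * thetaSeries w z = ∑ j : Fin 5, w ^ (j : ℕ) ^ 2 * y ^ (j : ℕ) *
      (thetaSeries (w ^ 5) (w ^ (4 * j : ℕ) * (y ^ 2 * z⁻¹)) *
        thetaSeries (w ^ 5) (w ^ (2 * j : ℕ) * (y * z ^ 2))) := by
  have hw₅ := norm_pow_lt_one hw (show 5 ≠ 0 by decide)
  have hsummable := summable_norm_zpow_sq_mul_zpow hw
  have hterm (p : Fin 5 × ℤ × ℤ) :
      w ^ (gaussianFiveEquiv p).1 ^ 2 * y ^ (gaussianFiveEquiv p).1 *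
        (w ^ (gaussianFiveEquiv p).2 ^ 2 * z ^ (gaussianFiveEquiv p).2) =
      w ^ (p.1 : ℕ) ^ 2 * y ^ (p.1 : ℕ) *
        ((w ^ 5) ^ p.2.1 ^ 2 * (w ^ (4 * p.1 : ℕ) * (y ^ 2 * z⁻¹)) ^ p.2.1 *
          ((w ^ 5) ^ p.2.2 ^ 2 * (w ^ (2 * p.1 : ℕ) * (y * z ^ 2)) ^ p.2.2)) := by
    obtain ⟨⟨j, hj⟩, m, n⟩ := p
    have hwexp : w ^ (2 * m + n + j) ^ 2 * w ^ (2 * n - m) ^ 2 = w ^ j ^ 2 *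
        ((w ^ 5) ^ m ^ 2 * (w ^ (4 * j)) ^ m * ((w ^ 5) ^ n ^ 2 * (w ^ (2 * j)) ^ n)) := by
      simp only [← zpow_natCast, ← zpow_mul, ← zpow_add₀ hw₀]
      congr 1
      push_cast
      ring
    have hyexp : y ^ (2 * m + n + j) = y ^ j * ((y ^ 2) ^ m * y ^ n) := by
      simp only [← zpow_natCast, ← zpow_mul, ← zpow_add₀ hy]
      congr 1
      push_cast
      ring
    have hzexp : z ^ (2 * n - m) = z⁻¹ ^ m * (z ^ 2) ^ n := by
      rw [inv_zpow', ← zpow_natCast, ← zpow_mul, ← zpow_add₀ hz]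
      congr 1
      push_cast
      ring
    simp only [gaussianFiveEquiv, Equiv.coe_fn_mk, mul_zpow]
    rw [mul_mul_mul_comm, hwexp, hyexp, hzexp]
    ring
  have hprod := gaussianFiveEquiv.summable_iff.2
    (summable_mul_of_summable_norm (hsummable y) (hsummable z))
  simp only [Function.comp_def] at hprod
  rw [thetaSeries, thetaSeries, tsum_mul_tsum_of_summable_norm (hsummable y) (hsummable z),
    ← gaussianFiveEquiv.tsum_eq, hprod.tsum_prod, tsum_fintype]
  refine sum_congr rfl fun j _ ↦ ?_
  simp only [hterm]
  rw [tsum_mul_left, thetaSeries, thetaSeries, tsum_mul_tsum_of_summable_norm] <;>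
    exact summable_norm_zpow_sq_mul_zpow hw₅ _

theorem thetaSeries_one_sq (hw : ‖w‖ < 1) (hw₀ : w ≠ 0) :
    thetaSeries w 1 ^ 2 = thetaSeries (w ^ 5) 1 ^ 2 +
      4 * w * (thetaSeries (w ^ 5) (w ^ 2) * thetaSeries (w ^ 5) (w ^ 4)) := by
  let ϑ (k : ℕ) := thetaSeries (w ^ 5) (w ^ k)
  have hsum : thetaSeries w 1 ^ 2 = ϑ 0 ^ 2 + w * (ϑ 4 * ϑ 2) + w ^ 4 * (ϑ 8 * ϑ 4) +
      w ^ 9 * (ϑ 12 * ϑ 6) + w ^ 16 * (ϑ 16 * ϑ 8) := by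
    simpa [Fin.sum_univ_five, ϑ, ← sq] using
      thetaSeries_mul_thetaSeries hw hw₀ one_ne_zero one_ne_zero
  have hshift := pow_mul_thetaSeries_pow_add hw₀ 5
  have h₆ : w * ϑ 6 = ϑ 4 := by simpa using hshift 1
  have h₈ : w ^ 3 * ϑ 8 = ϑ 2 := hshift 3
  have h₁₂ : w ^ 7 * ϑ 12 = ϑ 2 := hshift 7
  have h₁₆ : w ^ 11 * ϑ 16 = ϑ 6 := hshift 11
  have h₀ : thetaSeries (w ^ 5) 1 = ϑ 0 := by simp [ϑ]
  rw [hsum, h₀]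
  linear_combination (w * ϑ 4 + w ^ 2 * ϑ 6) * h₈ + 2 * w * ϑ 2 * h₆ + w ^ 2 * ϑ 6 * h₁₂ +
    w ^ 5 * ϑ 8 * h₁₆

theorem thetaSeries_self_sq (hw : ‖w‖ < 1) (hw₀ : w ≠ 0) :
    thetaSeries w w ^ 2 = w ^ 2 * thetaSeries (w ^ 5) (w ^ 5) ^ 2 +
      4 * (thetaSeries (w ^ 5) w * thetaSeries (w ^ 5) (w ^ 3)) := by
  let ϑ (k : ℕ) := thetaSeries (w ^ 5) (w ^ k)
  have hsum : thetaSeries w w ^ 2 = ϑ 1 * ϑ 3 + w ^ 2 * ϑ 5 ^ 2 + w ^ 6 * (ϑ 9 * ϑ 7) +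
      w ^ 12 * (ϑ 13 * ϑ 9) + w ^ 20 * (ϑ 17 * ϑ 11) := by
    have hw₁ : w ^ 2 * w⁻¹ = w := by field_simp
    simpa [Fin.sum_univ_five, ϑ, hw₁, ← sq, ← pow_succ, ← pow_succ', ← pow_add] using
      thetaSeries_mul_thetaSeries hw hw₀ hw₀ hw₀
  have hshift := pow_mul_thetaSeries_pow_add hw₀ 5
  have h₇ : w ^ 2 * ϑ 7 = ϑ 3 := hshift 2
  have h₉ : w ^ 4 * ϑ 9 = ϑ 1 := hshift 4
  have h₁₁ : w ^ 6 * ϑ 11 = ϑ 1 := hshift 6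
  have h₁₃ : w ^ 8 * ϑ 13 = ϑ 3 := hshift 8
  have h₁₇ : w ^ 12 * ϑ 17 = ϑ 7 := hshift 12
  have h₁ : thetaSeries (w ^ 5) w = ϑ 1 := by simp [ϑ]
  rw [hsum, h₁]
  linear_combination (w ^ 2 * ϑ 7 + ϑ 3) * h₉ + 2 * ϑ 1 * h₇ + w ^ 4 * ϑ 9 * h₁₃ +
    w ^ 8 * ϑ 11 * h₁₇ + w ^ 2 * ϑ 7 * h₁₁

end Quintic

section Products

variable {𝕜 : Type*} [NormedField 𝕜] [CompleteSpace 𝕜] {q w : 𝕜}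

lemma qPochhammerInf_sq_mul_eulerFun_sq (hq : ‖q‖ < 1) :
    qPochhammerInf q (q ^ 2) * eulerFun (q ^ 2) = eulerFun q := by
  rw [eulerFun, eulerFun, qPochhammerInf_eq_prod hq q two_ne_zero]
  simp [prod_range_succ, sq]

lemma qPochhammerInf_neg_mul_eulerFun (hq : ‖q‖ < 1) :
    qPochhammerInf (-q) q * eulerFun q = eulerFun (q ^ 2) := by
  rw [mul_comm, eulerFun, qPochhammerInf_mul_qPochhammerInf_neg hq, eulerFun]

lemma thetaSeries_neg_one_mul_eulerFun (hq : ‖q‖ < 1) :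
    thetaSeries (-q) 1 * eulerFun (q ^ 2) = eulerFun q ^ 2 := by
  rw [jacobi_triple_product (by rwa [norm_neg]) one_ne_zero, inv_one, one_mul, neg_neg, neg_sq,
    ← qPochhammerInf_sq_mul_eulerFun_sq hq]
  ring

lemma thetaSeries_sq_neg_mul_eulerFun (hq : ‖q‖ < 1) (hq₀ : q ≠ 0) :
    thetaSeries (q ^ 2) (-q) * eulerFun (q ^ 2) = eulerFun q * eulerFun (q ^ 4) := by
  have hq₂ := norm_pow_lt_one hq two_ne_zero
  have hodd : qPochhammerInf q (q ^ 2) =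
      qPochhammerInf q (q ^ 4) * qPochhammerInf (q ^ 3) (q ^ 4) := by
    rw [qPochhammerInf_eq_prod hq₂ q two_ne_zero]
    simp [prod_range_succ, ← pow_succ', ← pow_mul]
  have hinv : -((-q)⁻¹ * q ^ 2) = q := by field_simp
  rw [jacobi_triple_product hq₂ (neg_ne_zero.2 hq₀), hinv, ← qPochhammerInf_sq_mul_eulerFun_sq hq,
    hodd]
  ring_nf

lemma thetaSeries_self_mul_eulerFun (hw : ‖w‖ < 1) (hw₀ : w ≠ 0) :
    thetaSeries w w * eulerFun (w ^ 2) = 2 * eulerFun (w ^ 4) ^ 2 := by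
  have hw₂ := norm_pow_lt_one hw two_ne_zero
  have hneg := qPochhammerInf_neg_mul_eulerFun hw₂
  have hone : qPochhammerInf (-1) (w ^ 2) = 2 * qPochhammerInf (-w ^ 2) (w ^ 2) := by
    rw [qPochhammerInf_eq_one_sub_mul hw₂]
    norm_num
  rw [← pow_mul] at hneg
  rw [jacobi_triple_product hw hw₀, inv_mul_cancel₀ hw₀, ← sq, hone, ← hneg]
  ring

lemma thetaSeries_one_three_mul_eulerFun (hw : ‖w‖ < 1) (hw₀ : w ≠ 0) :
    thetaSeries (w ^ 5) w * thetaSeries (w ^ 5) (w ^ 3) * (eulerFun (w ^ 2) * eulerFun (w ^ 20)) =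
      eulerFun (w ^ 4) * eulerFun (w ^ 10) ^ 3 := by
  have hw₂ := norm_pow_lt_one hw two_ne_zero
  have hw₅ := norm_pow_lt_one hw (show 5 ≠ 0 by decide)
  have hw₁₀ := norm_pow_lt_one hw (show 10 ≠ 0 by decide)
  let P (k : ℕ) := qPochhammerInf (-w ^ k) (w ^ 10)
  have hdissect : qPochhammerInf (-w ^ 2) (w ^ 2) = P 2 * P 4 * P 6 * P 8 * P 10 := by
    rw [qPochhammerInf_eq_prod hw₂ _ (show 5 ≠ 0 by decide)]
    simp [P, prod_range_succ, ← pow_mul, ← pow_add]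
  have h₁ : thetaSeries (w ^ 5) w = eulerFun (w ^ 10) * (P 6 * P 4) := by
    rw [jacobi_triple_product hw₅ hw₀, ← pow_mul, ← pow_succ',
      show w⁻¹ * w ^ 5 = w ^ 4 by field_simp]
  have h₃ : thetaSeries (w ^ 5) (w ^ 3) = eulerFun (w ^ 10) * (P 8 * P 2) := by
    rw [jacobi_triple_product hw₅ (pow_ne_zero 3 hw₀), ← pow_mul, ← pow_add,
      show (w ^ 3)⁻¹ * w ^ 5 = w ^ 2 by field_simp]
  have hneg₂ := qPochhammerInf_neg_mul_eulerFun hw₂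
  have hneg₁₀ := qPochhammerInf_neg_mul_eulerFun hw₁₀
  rw [hdissect, ← pow_mul] at hneg₂
  rw [← pow_mul] at hneg₁₀
  rw [h₁, h₃, ← hneg₂, ← hneg₁₀]
  ring

lemma thetaSeries_two_four_mul_eulerFun (hq : ‖q‖ < 1) (hq₀ : q ≠ 0) :
    thetaSeries (-q ^ 5) (q ^ 2) * thetaSeries (-q ^ 5) (q ^ 4) *
        (eulerFun (q ^ 2) * eulerFun (q ^ 5)) =
      eulerFun q * eulerFun (q ^ 10) ^ 3 := by
  have hq₂ := norm_pow_lt_one hq two_ne_zero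
  have hq₅ := norm_pow_lt_one hq (show 5 ≠ 0 by decide)
  have hneg₅ : ‖-q ^ 5‖ < 1 := by rwa [norm_neg]
  let P (k : ℕ) := qPochhammerInf (q ^ k) (q ^ 10)
  have hdissect : qPochhammerInf q (q ^ 2) = P 1 * P 3 * P 5 * P 7 * P 9 := by
    rw [qPochhammerInf_eq_prod hq₂ _ (show 5 ≠ 0 by decide)]
    simp [P, prod_range_succ, ← pow_mul, ← pow_succ']
  have h₂ : thetaSeries (-q ^ 5) (q ^ 2) = eulerFun (q ^ 10) * (P 7 * P 3) := by
    rw [jacobi_triple_product hneg₅ (pow_ne_zero 2 hq₀), neg_sq, ← pow_mul, mul_neg, mul_neg,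
      neg_neg, neg_neg, ← pow_add, show (q ^ 2)⁻¹ * q ^ 5 = q ^ 3 by field_simp]
  have h₄ : thetaSeries (-q ^ 5) (q ^ 4) = eulerFun (q ^ 10) * (P 9 * P 1) := by
    rw [jacobi_triple_product hneg₅ (pow_ne_zero 4 hq₀), neg_sq, ← pow_mul, mul_neg, mul_neg,
      neg_neg, neg_neg, ← pow_add, show (q ^ 4)⁻¹ * q ^ 5 = q ^ 1 by field_simp]
  have hodd := qPochhammerInf_sq_mul_eulerFun_sq hq
  have hodd₅ := qPochhammerInf_sq_mul_eulerFun_sq hq₅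
  rw [hdissect] at hodd
  rw [← pow_mul] at hodd₅
  rw [h₂, h₄, ← hodd, ← hodd₅]
  ring

end Products

section LevelTen

section Relations

variable {𝕜 : Type*} [NormedField 𝕜] [CompleteSpace 𝕜] {q w : 𝕜}

theorem eulerFun_modular_relation_add [NeZero (4 : 𝕜)] (hw : ‖w‖ < 1) (hw₀ : w ≠ 0) :
    eulerFun (w ^ 4) ^ 4 * eulerFun (w ^ 10) ^ 2 * eulerFun (w ^ 20) =
      w ^ 2 * eulerFun (w ^ 2) ^ 2 * eulerFun (w ^ 20) ^ 5 +
        eulerFun (w ^ 2) * eulerFun (w ^ 4) * eulerFun (w ^ 10) ^ 5 := by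
  have hsq := thetaSeries_self_sq hw hw₀
  have hθ := thetaSeries_self_mul_eulerFun hw hw₀
  have hθ₅ := thetaSeries_self_mul_eulerFun (norm_pow_lt_one hw (show 5 ≠ 0 by decide))
    (pow_ne_zero 5 hw₀)
  have hθθ := thetaSeries_one_three_mul_eulerFun hw hw₀
  simp only [← pow_mul, Nat.reduceMul] at hθ₅
  refine mul_left_cancel₀ (NeZero.ne (4 : 𝕜)) ?_
  linear_combination eulerFun (w ^ 2) ^ 2 * eulerFun (w ^ 10) ^ 2 * eulerFun (w ^ 20) * hsq -
    eulerFun (w ^ 10) ^ 2 * eulerFun (w ^ 20) *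
      (thetaSeries w w * eulerFun (w ^ 2) + 2 * eulerFun (w ^ 4) ^ 2) * hθ +
    w ^ 2 * eulerFun (w ^ 2) ^ 2 * eulerFun (w ^ 20) *
      (thetaSeries (w ^ 5) (w ^ 5) * eulerFun (w ^ 10) + 2 * eulerFun (w ^ 20) ^ 2) * hθ₅ +
    4 * eulerFun (w ^ 2) * eulerFun (w ^ 10) ^ 2 * hθθ

theorem eulerFun_modular_relation_sub (hq : ‖q‖ < 1) (hq₀ : q ≠ 0) :
    eulerFun q ^ 4 * eulerFun (q ^ 10) ^ 2 * eulerFun (q ^ 5) =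
      eulerFun (q ^ 5) ^ 5 * eulerFun (q ^ 2) ^ 2 -
        4 * q * eulerFun q * eulerFun (q ^ 2) * eulerFun (q ^ 10) ^ 5 := by
  have hsq := thetaSeries_one_sq (w := -q) (by rwa [norm_neg]) (neg_ne_zero.2 hq₀)
  have hθ := thetaSeries_neg_one_mul_eulerFun hq
  have hθ₅ := thetaSeries_neg_one_mul_eulerFun (norm_pow_lt_one hq (show 5 ≠ 0 by decide))
  have hθθ := thetaSeries_two_four_mul_eulerFun hq hq₀
  rw [Odd.neg_pow (by decide) q, neg_sq, Even.neg_pow (by decide) q] at hsq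
  rw [← pow_mul] at hθ₅
  linear_combination eulerFun (q ^ 2) ^ 2 * eulerFun (q ^ 10) ^ 2 * eulerFun (q ^ 5) * hsq -
    eulerFun (q ^ 10) ^ 2 * eulerFun (q ^ 5) *
      (thetaSeries (-q) 1 * eulerFun (q ^ 2) + eulerFun q ^ 2) * hθ +
    eulerFun (q ^ 2) ^ 2 * eulerFun (q ^ 5) *
      (thetaSeries (-q ^ 5) 1 * eulerFun (q ^ 10) + eulerFun (q ^ 5) ^ 2) * hθ₅ -
    4 * q * eulerFun (q ^ 2) * eulerFun (q ^ 10) ^ 2 * hθθ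

end Relations

/-- The eta quotient `η(τ) η(10τ)⁵ / (η(2τ) η(5τ)⁵)` with `q = exp(2πiτ)`, a Hauptmodul for
`Γ₀(10)`. -/
noncomputable def hauptmodulTen (q : ℝ) : ℝ :=
  q * eulerFun q * eulerFun (q ^ 10) ^ 5 / (eulerFun (q ^ 2) * eulerFun (q ^ 5) ^ 5)

variable {q : ℝ}

lemma eulerFun_pow_pos (hq₀ : 0 ≤ q) (hq₁ : q < 1) {n : ℕ} (hn : n ≠ 0) : 0 < eulerFun (q ^ n) :=
  eulerFun_pos (pow_nonneg hq₀ n) (pow_lt_one₀ hq₀ hq₁ hn)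

lemma hauptmodulTen_pos (hq₀ : 0 < q) (hq₁ : q < 1) : 0 < hauptmodulTen q := by
  have h₁ := eulerFun_pos hq₀.le hq₁
  have h₂ := eulerFun_pow_pos hq₀.le hq₁ (n := 2) (by decide)
  have h₅ := eulerFun_pow_pos hq₀.le hq₁ (n := 5) (by decide)
  have h₁₀ := eulerFun_pow_pos hq₀.le hq₁ (n := 10) (by decide)
  unfold hauptmodulTen
  positivity

lemma one_add_hauptmodulTen (hq₀ : 0 < q) (hq₁ : q < 1) :
    1 + hauptmodulTen q =
      eulerFun (q ^ 2) ^ 3 * eulerFun (q ^ 10) / (eulerFun q * eulerFun (q ^ 5) ^ 3) := by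
  have h₁ := eulerFun_pos hq₀.le hq₁
  have h₂ := eulerFun_pow_pos hq₀.le hq₁ (n := 2) (by decide)
  have h₅ := eulerFun_pow_pos hq₀.le hq₁ (n := 5) (by decide)
  have hrel := eulerFun_modular_relation_add (w := √q)
    (by rwa [norm_of_nonneg (sqrt_nonneg q), sqrt_lt' one_pos, one_pow]) (sqrt_pos.2 hq₀).ne'
  have hpow (n : ℕ) : √q ^ (2 * n) = q ^ n := by rw [pow_mul, sq_sqrt hq₀.le]
  rw [sq_sqrt hq₀.le, hpow 2, hpow 5, hpow 10] at hrel
  unfold hauptmodulTen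
  field_simp
  linear_combination -hrel

lemma one_sub_four_mul_hauptmodulTen (hq₀ : 0 < q) (hq₁ : q < 1) :
    1 - 4 * hauptmodulTen q =
      eulerFun q ^ 4 * eulerFun (q ^ 10) ^ 2 / (eulerFun (q ^ 2) ^ 2 * eulerFun (q ^ 5) ^ 4) := by
  have h₂ := eulerFun_pow_pos hq₀.le hq₁ (n := 2) (by decide)
  have h₅ := eulerFun_pow_pos hq₀.le hq₁ (n := 5) (by decide)
  have hrel := eulerFun_modular_relation_sub (by rwa [norm_of_nonneg hq₀.le]) hq₀.ne'
  unfold hauptmodulTen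
  field_simp
  linear_combination -hrel

lemma one_sub_four_mul_hauptmodulTen_pos (hq₀ : 0 < q) (hq₁ : q < 1) :
    0 < 1 - 4 * hauptmodulTen q := by
  have h₁ := eulerFun_pos hq₀.le hq₁
  have h₂ := eulerFun_pow_pos hq₀.le hq₁ (n := 2) (by decide)
  have h₅ := eulerFun_pow_pos hq₀.le hq₁ (n := 5) (by decide)
  have h₁₀ := eulerFun_pow_pos hq₀.le hq₁ (n := 10) (by decide)
  rw [one_sub_four_mul_hauptmodulTen hq₀ hq₁]
  positivity

lemma one_add_mul_one_sub_hauptmodulTen_pos (hq₀ : 0 < q) (hq₁ : q < 1) :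
    0 < (1 + hauptmodulTen q) * (1 - 4 * hauptmodulTen q) :=
  mul_pos (add_pos one_pos (hauptmodulTen_pos hq₀ hq₁)) (one_sub_four_mul_hauptmodulTen_pos hq₀ hq₁)

theorem hauptmodulTen_sq_relation (hq₀ : 0 < q) (hq₁ : q < 1) :
    hauptmodulTen q ^ 2 + 2 * hauptmodulTen q * hauptmodulTen (q ^ 2) +
      4 * hauptmodulTen q * hauptmodulTen (q ^ 2) ^ 2 - hauptmodulTen (q ^ 2) = 0 := by
  have hq₀' : 0 < q ^ 2 := by positivity
  have hq₁' : q ^ 2 < 1 := pow_lt_one₀ hq₀.le hq₁ two_ne_zero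
  have hk := hauptmodulTen_pos hq₀ hq₁
  have hl := hauptmodulTen_pos hq₀' hq₁'
  have h₁ := eulerFun_pos hq₀.le hq₁
  have h₂ := eulerFun_pow_pos hq₀.le hq₁ (n := 2) (by decide)
  have h₄ := eulerFun_pow_pos hq₀.le hq₁ (n := 4) (by decide)
  have h₅ := eulerFun_pow_pos hq₀.le hq₁ (n := 5) (by decide)
  have h₁₀ := eulerFun_pow_pos hq₀.le hq₁ (n := 10) (by decide)
  have h₂₀ := eulerFun_pow_pos hq₀.le hq₁ (n := 20) (by decide)
  have hleft : (1 + hauptmodulTen q) ^ 2 * (1 - 4 * hauptmodulTen q) / hauptmodulTen q ^ 2 =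
      eulerFun (q ^ 2) ^ 6 / (q ^ 2 * eulerFun (q ^ 10) ^ 6) := by
    rw [one_add_hauptmodulTen hq₀ hq₁, one_sub_four_mul_hauptmodulTen hq₀ hq₁, hauptmodulTen]
    field_simp
  have hright : (1 + hauptmodulTen (q ^ 2)) * (1 - 4 * hauptmodulTen (q ^ 2)) ^ 2 /
      hauptmodulTen (q ^ 2) = eulerFun (q ^ 2) ^ 6 / (q ^ 2 * eulerFun (q ^ 10) ^ 6) := by
    rw [one_add_hauptmodulTen hq₀' hq₁', one_sub_four_mul_hauptmodulTen hq₀' hq₁', hauptmodulTen]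
    simp only [← pow_mul, Nat.reduceMul]
    field_simp
  have heq := hleft.trans hright.symm
  rw [div_eq_div_iff (by positivity) (by positivity)] at heq
  have hne : 1 + 4 * hauptmodulTen q * hauptmodulTen (q ^ 2) ≠ 0 := by positivity
  refine (mul_eq_zero.1 ?_).resolve_left hne
  linear_combination -heq

lemma hauptmodulTen_resultant_eq_zero {R : Type*} [CommRing R] [NoZeroDivisors R] {k l n : R}
    (hl : l ≠ 0) (hkl : k ^ 2 + 2 * k * l + 4 * k * l ^ 2 - l = 0)
    (hln : l ^ 2 + 2 * l * n + 4 * l * n ^ 2 - n = 0) :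
    k ^ 2 * (4 * n + k) ^ 2 + (1 - 2 * k + 8 * k * n + 16 * k * n ^ 2) * n *
      (2 * k - 1 + 2 * k ^ 2 + 4 * k ^ 2 * n) = 0 := by
  have hlinear : (-(4 * k * n) - k ^ 2) * l +
      (-((2 * k - 1) * n) - k ^ 2 * (2 * n + 4 * n ^ 2)) = 0 := by
    refine (mul_eq_zero.1 ?_).resolve_left hl
    linear_combination -n * hkl - k ^ 2 * hln
  linear_combination (2 * k - 1 - 4 * k * (2 * n + 4 * n ^ 2)) * hlinear +
    (4 * k * n + k ^ 2) * (hkl - 4 * k * hln)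

theorem hauptmodulTen_pow_four_relation (hq₀ : 0 < q) (hq₁ : q < 1) :
    let k := hauptmodulTen q; let n := hauptmodulTen (q ^ 4)
    k ^ 2 * (4 * n + k) ^ 2 + (1 - 2 * k + 8 * k * n + 16 * k * n ^ 2) * n *
      (2 * k - 1 + 2 * k ^ 2 + 4 * k ^ 2 * n) = 0 := by
  have hq₀' : 0 < q ^ 2 := by positivity
  have hq₁' : q ^ 2 < 1 := pow_lt_one₀ hq₀.le hq₁ two_ne_zero
  have hln := hauptmodulTen_sq_relation hq₀' hq₁'
  rw [← pow_mul] at hln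
  exact hauptmodulTen_resultant_eq_zero (hauptmodulTen_pos hq₀' hq₁').ne'
    (hauptmodulTen_sq_relation hq₀ hq₁) hln

end LevelTen

section Conic

variable {K : Type*} [Field K]

/-- The abscissa in the rational parametrisation of the conic `5 γ² = 5 x² + 6 x + 5`; by
`b_five_eq_conicX` it expresses `b s 5` through `hauptmodulTen`. -/
def conicX (k : K) : K := 5 * k / ((1 + k) * (1 - 4 * k))

/-- The ordinate in the rational parametrisation of the conic `5 γ² = 5 x² + 6 x + 5`. -/
def conicY (k : K) : K := (1 + 4 * k ^ 2) / ((1 + k) * (1 - 4 * k))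

lemma five_mul_conicY_sq {k : K} (hk : (1 + k) * (1 - 4 * k) ≠ 0) :
    5 * conicY k ^ 2 = 5 * conicX k ^ 2 + 6 * conicX k + 5 := by
  unfold conicX conicY
  generalize hv : (1 + k) * (1 - 4 * k) = v at hk ⊢
  field_simp
  rw [← hv]
  ring

theorem conic_modular_relation [CharZero K] {k n : K} (hk : (1 + k) * (1 - 4 * k) ≠ 0)
    (hn : (1 + n) * (1 - 4 * n) ≠ 0)
    (hkn : k ^ 2 * (4 * n + k) ^ 2 + (1 - 2 * k + 8 * k * n + 16 * k * n ^ 2) * n *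
      (2 * k - 1 + 2 * k ^ 2 + 4 * k ^ 2 * n) = 0) :
    let x := conicX k; let z := conicX n
    125 * x * z * (x ^ 2 * z ^ 2 + 1) + 5 * (x * z + 1) * (x ^ 3 + z ^ 3) +
        135 * x * z * (x * z + 1) * (x + z) + 103 * x * z * (x ^ 2 + z ^ 2) +
        202 * x ^ 2 * z ^ 2 + 3 * (x ^ 4 + z ^ 4) =
      5 * conicY k * conicY n *
        (x ^ 3 + z ^ 3 - 15 * x * z * (x * z + 1) - 4 * x * z * (x + z)) := by
  intro x z
  -- Up to a common factor, `A`, `B`, `-C`, `-D` are the coefficients of `hkn` on the basis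
  -- `1, γ, δ, γ δ` over `K(x, z)`, where `γ = conicY k` and `δ = conicY n`.
  obtain ⟨A, hA⟩ : ∃ A, A = 25 * x ^ 2 * z ^ 2 - 50 * x * z * (x + z) + 20 * x * z -
    31 * (x ^ 2 + z ^ 2) - 50 * (x + z) + 25 := ⟨_, rfl⟩
  obtain ⟨B, hB⟩ : ∃ B, B = 25 * x * z ^ 2 + 110 * x * z - 65 * z ^ 2 + 65 * x - 110 * z - 25 :=
    ⟨_, rfl⟩
  obtain ⟨C, hC⟩ : ∃ C, C = 25 * x ^ 2 * z + 110 * x * z - 65 * x ^ 2 - 110 * x + 65 * z - 25 :=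
    ⟨_, rfl⟩
  obtain ⟨D, hD⟩ : ∃ D, D = 25 * x * z + 95 * (x + z) + 25 := ⟨_, rfl⟩
  have hbilinear : A + B * conicY k - C * conicY n - D * conicY k * conicY n = 0 := by
    simp only [hA, hB, hC, hD, x, z, conicX, conicY]
    generalize hu : (1 + k) * (1 - 4 * k) = u at hk ⊢
    generalize hv : (1 + n) * (1 - 4 * n) = v at hn ⊢
    field_simp
    rw [← hu, ← hv]
    linear_combination 1600 * hkn
  have hnorm : (A - D * conicY k * conicY n) ^ 2 = (B * conicY k - C * conicY n) ^ 2 := by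
    linear_combination (A - B * conicY k + C * conicY n - D * conicY k * conicY n) * hbilinear
  have hreduced : 25 * A ^ 2 + D ^ 2 * (5 * x ^ 2 + 6 * x + 5) * (5 * z ^ 2 + 6 * z + 5) -
      5 * B ^ 2 * (5 * x ^ 2 + 6 * x + 5) - 5 * C ^ 2 * (5 * z ^ 2 + 6 * z + 5) =
      50 * conicY k * conicY n * (A * D - B * C) := by
    rw [← five_mul_conicY_sq hk, ← five_mul_conicY_sq hn]
    linear_combination 25 * hnorm
  rw [hA, hB, hC, hD] at hreduced
  refine mul_left_cancel₀ (show (12800 : K) ≠ 0 by norm_num) ?_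
  linear_combination hreduced

end Conic

section Ramanujan

variable {q : ℝ}

lemma phi_eq_thetaSeries (q : ℝ) : phi q = thetaSeries q 1 := by
  simp [phi, thetaSeries]

lemma psi_eq_thetaSeries (hq : q ≠ 0) : psi q = thetaSeries (q ^ 2) q := by
  rw [psi, thetaSeries, ← Equiv.intEquivNat.tsum_eq]
  refine tsum_congr fun n ↦ ?_
  rw [← zpow_natCast q, ← zpow_natCast q, ← zpow_mul, ← zpow_add₀ hq]
  congr 1
  rcases n with m | m
  · change ((2 * m * (2 * m + 1) / 2 : ℕ) : ℤ) = 2 * (m : ℤ) ^ 2 + m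
    rw [mul_assoc, Nat.mul_div_cancel_left _ two_pos]
    push_cast
    ring
  · change (((2 * m + 1) * (2 * m + 1 + 1) / 2 : ℕ) : ℤ) =
      2 * Int.negSucc m ^ 2 + Int.negSucc m
    rw [show (2 * m + 1) * (2 * m + 1 + 1) = 2 * ((2 * m + 1) * (m + 1)) by ring,
      Nat.mul_div_cancel_left _ two_pos, Int.negSucc_eq]
    push_cast
    ring

lemma psi_neg_mul_phi_neg (hq₀ : 0 < q) (hq₁ : q < 1) :
    psi (-q) * phi (-q ^ 2) = eulerFun q * eulerFun (q ^ 2) := by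
  have hq : ‖q‖ < 1 := by rwa [norm_of_nonneg hq₀.le]
  have hpsi := thetaSeries_sq_neg_mul_eulerFun hq hq₀.ne'
  have hphi := thetaSeries_neg_one_mul_eulerFun (norm_pow_lt_one hq two_ne_zero)
  rw [← neg_sq, ← psi_eq_thetaSeries (neg_ne_zero.2 hq₀.ne'), neg_sq] at hpsi
  rw [← phi_eq_thetaSeries, ← pow_mul] at hphi
  have hne : eulerFun (q ^ 2) * eulerFun (q ^ 4) ≠ 0 :=
    mul_ne_zero (eulerFun_ne_zero (norm_pow_lt_one hq two_ne_zero))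
      (eulerFun_ne_zero (norm_pow_lt_one hq four_ne_zero))
  refine mul_right_cancel₀ hne ?_
  linear_combination phi (-q ^ 2) * eulerFun (q ^ 4) * hpsi +
    eulerFun q * eulerFun (q ^ 4) * hphi

/-- The nome of `b s 5`, namely `exp (-π √(s / 5))`. -/
noncomputable def nomeFive (s : ℝ) : ℝ := exp (-(π * √(s / 5)))

lemma nomeFive_pos (s : ℝ) : 0 < nomeFive s := exp_pos _

lemma nomeFive_lt_one {s : ℝ} (hs : 0 < s) : nomeFive s < 1 := by
  rw [nomeFive, exp_lt_one_iff, neg_lt_zero]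
  positivity

lemma nomeFive_sq_mul (s : ℝ) (n : ℕ) : nomeFive (n ^ 2 * s) = nomeFive s ^ n := by
  rw [nomeFive, nomeFive, mul_div_assoc, sqrt_mul (sq_nonneg _), sqrt_sq (Nat.cast_nonneg n),
    ← exp_nat_mul]
  ring_nf

lemma b_five_eq_eulerFun {s : ℝ} (hs : 0 < s) :
    b s 5 = 5 * nomeFive s * (eulerFun (nomeFive s ^ 5) * eulerFun (nomeFive s ^ 10)) ^ 2 /
      (eulerFun (nomeFive s) * eulerFun (nomeFive s ^ 2)) ^ 2 := by
  have hq₀ := nomeFive_pos s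
  have hq₁ := nomeFive_lt_one hs
  have hfive : exp (-(π * √(s * 5))) = nomeFive s ^ 5 := by
    rw [← nomeFive_sq_mul, nomeFive]
    ring_nf
  have hsq (r : ℝ) : exp (-(2 * π * r)) = exp (-(π * r)) ^ 2 := by
    rw [← exp_nat_mul]
    ring_nf
  have hfactor : exp (-((5 - 1) * (π / 4) * √(s / 5))) = nomeFive s := by
    rw [nomeFive]
    ring_nf
  rw [b, hfactor, hsq, hsq, hfive, ← nomeFive, mul_assoc (5 * nomeFive s), ← mul_pow, ← mul_pow,
    psi_neg_mul_phi_neg hq₀ hq₁, psi_neg_mul_phi_neg (by positivity)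
      (pow_lt_one₀ hq₀.le hq₁ (by decide)), ← pow_mul]

theorem b_five_eq_conicX {s : ℝ} (hs : 0 < s) :
    b s 5 = conicX (hauptmodulTen (nomeFive s)) := by
  have hq₀ := nomeFive_pos s
  have hq₁ := nomeFive_lt_one hs
  have h₁ := eulerFun_pos hq₀.le hq₁
  have h₂ := eulerFun_pow_pos hq₀.le hq₁ (n := 2) (by decide)
  have h₅ := eulerFun_pow_pos hq₀.le hq₁ (n := 5) (by decide)
  have h₁₀ := eulerFun_pow_pos hq₀.le hq₁ (n := 10) (by decide)
  rw [b_five_eq_eulerFun hs, conicX, one_add_hauptmodulTen hq₀ hq₁,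
    one_sub_four_mul_hauptmodulTen hq₀ hq₁, hauptmodulTen]
  field_simp

lemma b_five_pos {s : ℝ} (hs : 0 < s) : 0 < b s 5 := by
  have hq₀ := nomeFive_pos s
  have hq₁ := nomeFive_lt_one hs
  rw [b_five_eq_conicX hs]
  exact div_pos (mul_pos (by norm_num) (hauptmodulTen_pos hq₀ hq₁))
    (one_add_mul_one_sub_hauptmodulTen_pos hq₀ hq₁)

theorem b_five_modular_relation {s : ℝ} (hs : 0 < s) :
    let x := b s 5; let z := b (16 * s) 5
    (125 * x * z * (x ^ 2 * z ^ 2 + 1) + 5 * (x * z + 1) * (x ^ 3 + z ^ 3) +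
        135 * x * z * (x * z + 1) * (x + z) + 103 * x * z * (x ^ 2 + z ^ 2) +
        202 * x ^ 2 * z ^ 2 + 3 * (x ^ 4 + z ^ 4)) ^ 2 =
      (5 * x ^ 2 + 6 * x + 5) * (5 * z ^ 2 + 6 * z + 5) *
        (x ^ 3 + z ^ 3 - 15 * x * z * (x * z + 1) - 4 * x * z * (x + z)) ^ 2 := by
  have hq₀ := nomeFive_pos s
  have hq₁ := nomeFive_lt_one hs
  have hq₀' : 0 < nomeFive s ^ 4 := by positivity
  have hq₁' : nomeFive s ^ 4 < 1 := pow_lt_one₀ hq₀.le hq₁ four_ne_zero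
  have hnome : nomeFive (16 * s) = nomeFive s ^ 4 := by
    rw [← nomeFive_sq_mul]
    norm_num
  have hk := (one_add_mul_one_sub_hauptmodulTen_pos hq₀ hq₁).ne'
  have hn := (one_add_mul_one_sub_hauptmodulTen_pos hq₀' hq₁').ne'
  have hconic := conic_modular_relation hk hn (hauptmodulTen_pow_four_relation hq₀ hq₁)
  have hz : b (16 * s) 5 = conicX (hauptmodulTen (nomeFive s ^ 4)) := by
    rw [b_five_eq_conicX (by positivity), hnome]
  simp only at hconic
  simp only [b_five_eq_conicX hs, hz]
  rw [hconic, ← five_mul_conicY_sq hk, ← five_mul_conicY_sq hn]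
  ring

lemma sqrt_mul_mul_sqrt_div {x z : ℝ} (hx : 0 ≤ x) (hz : 0 < z) : √(x * z) * √(x / z) = x := by
  rw [← sqrt_mul (by positivity), show x * z * (x / z) = x ^ 2 by field_simp, sqrt_sq hx]

lemma sqrt_mul_div_sqrt_div {x z : ℝ} (hx : 0 < x) (hz : 0 ≤ z) : √(x * z) / √(x / z) = z := by
  rw [← sqrt_div (by positivity), show x * z / (x / z) = z ^ 2 by field_simp, sqrt_sq hz]

end Ramanujan

theorem stmt_11 (s X Y : ℝ) (hs : 0 < s)
    (hX : X = Real.sqrt (b s 5 * b (16 * s) 5))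
    (hY : Y = Real.sqrt (b s 5 / b (16 * s) 5)) :
    (Y ^ 8 + 1 / Y ^ 8) - 52 * (Y ^ 6 + 1 / Y ^ 6) - 1024 * (Y ^ 4 + 1 / Y ^ 4)
      - 3987 * (Y ^ 2 + 1 / Y ^ 2)
      - 5 * (X + 1 / X) * (1076 * (Y + 1 / Y) + 384 * (Y ^ 3 + 1 / Y ^ 3)
          + 35 * (Y ^ 5 + 1 / Y ^ 5))
      - 5 ^ 2 * (X ^ 2 + 1 / X ^ 2) * (92 * (Y ^ 2 + 1 / Y ^ 2)
          + 8 * (Y ^ 4 + 1 / Y ^ 4) + 149)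
      - 5 ^ 3 * (X ^ 3 + 1 / X ^ 3) * (12 * (Y + 1 / Y) + (Y ^ 3 + 1 / Y ^ 3))
      - 5 ^ 4 * (X ^ 4 + 1 / X ^ 4) - 7676 = 0 := by
  have hx := b_five_pos hs
  have hz : 0 < b (16 * s) 5 := b_five_pos (by positivity)
  have hX₀ : 0 < X := by rw [hX]; positivity
  have hY₀ : 0 < Y := by rw [hY]; positivity
  have hXY : b s 5 = X * Y := by rw [hX, hY, sqrt_mul_mul_sqrt_div hx.le hz]
  have hXdY : b (16 * s) 5 = X / Y := by rw [hX, hY, sqrt_mul_div_sqrt_div hx hz.le]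
  have hrel := b_five_modular_relation hs
  simp only [hXY, hXdY] at hrel
  linear_combination (norm := skip) -1 / (16 * X ^ 8) * hrel
  field_simp
  ring
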